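/- arXiv:2202.12846 — 2 statements merged into one kernel-verified Lean document; each statement's English description precedes it below -/
import Mathlib

section
/- Let σ : ℝ → ℝ be expressive. Then for every k ≥ 0 and every P ≥ k such that Σ^{(P)}(0) ≠ 0, where Σ(t) := E_{Y∼N(0,1)}[σ(Y+t)] is the Gaussian smoothing of σ, it holds that INAL(M_k, σ) = Ω(n^{-P}) as n → ∞, where M_k(x) = ∏_{i=1}^k x_i is viewed as a Boolean function on {±1}^n for every n ≥ k. -/
open MeasureTheory ProbabilityTheory Filter Finset Asymptotics
open scoped NNReal ENNReal

noncomputable section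

/-- The ±1 value encoded by a Boolean bit. -/
def bsign (b : Bool) : ℝ := if b then 1 else -1

/-- Expectation over a uniformly random point of the Boolean cube `{±1}^n`. -/
def bExp (n : ℕ) (g : (Fin n → Bool) → ℝ) : ℝ :=
  (∑ x : Fin n → Bool, g x) / 2 ^ n

/-- A function on the Boolean cube is Boolean(-valued) if it takes values in `{±1}`. -/
def IsBooleanFn {n : ℕ} (f : (Fin n → Bool) → ℝ) : Prop := ∀ x, f x = 1 ∨ f x = -1

/-- Initialization distribution: the weights `w : ℝⁿ` and the bias `b` are
iid `N(0, 1/n)` Gaussians. -/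
def initMeasure (n : ℕ) : Measure ((Fin n → ℝ) × ℝ) :=
  (Measure.pi fun _ : Fin n => gaussianReal 0 (n : ℝ≥0)⁻¹).prod (gaussianReal 0 (n : ℝ≥0)⁻¹)

/-- Initial alignment `INAL(f, σ) = E_{w,b} [ (E_x [f(x) σ(wᵀx + b)])² ]`. -/
def INAL (n : ℕ) (f : (Fin n → Bool) → ℝ) (σ : ℝ → ℝ) : ℝ :=
  ∫ θ : (Fin n → ℝ) × ℝ,
    (bExp n fun x => f x * σ (∑ i, θ.1 i * bsign (x i) + θ.2)) ^ 2 ∂ initMeasure n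

/-- The `v`-Gaussian smoothing `Σ_v(t) = E_{Y ∼ N(0,v)} [σ(Y + t)]`. -/
def gsmooth (σ : ℝ → ℝ) (v : ℝ) (t : ℝ) : ℝ :=
  ∫ y, σ (y + t) ∂ gaussianReal 0 v.toNNReal

/-- `σ` is polynomially bounded: `|σ(x)| ≤ C |x|^c + C` for some `C, c > 0`. -/
def PolyBounded (σ : ℝ → ℝ) : Prop :=
  ∃ C : ℝ, 0 < C ∧ ∃ c : ℕ, 0 < c ∧ ∀ x : ℝ, |σ x| ≤ C * |x| ^ c + C

/-- `σ` is expressive: measurable, polynomially bounded, and its Gaussian smoothing has no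
two consecutive vanishing derivatives at `0`. -/
def Expressive (σ : ℝ → ℝ) : Prop :=
  Measurable σ ∧ PolyBounded σ ∧
    ∀ m : ℕ, iteratedDeriv m (gsmooth σ 1) 0 ≠ 0 ∨ iteratedDeriv (m + 1) (gsmooth σ 1) 0 ≠ 0

/-- A nonnegative sequence is negligible if it decays faster than any inverse polynomial. -/
def Negligible (g : ℕ → ℝ) : Prop :=
  ∀ c : ℕ, Tendsto (fun n : ℕ => (n : ℝ) ^ c * g n) atTop (nhds 0)

/-- Fourier character `M_S(x) = ∏_{i ∈ S} x_i`. -/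
def chi {n : ℕ} (S : Finset (Fin n)) (x : Fin n → Bool) : ℝ := ∏ i ∈ S, bsign (x i)

/-- Fourier coefficient `f̂(S) = E_x [f(x) M_S(x)]`. -/
def fourierCoef (n : ℕ) (f : (Fin n → Bool) → ℝ) (S : Finset (Fin n)) : ℝ :=
  bExp n fun x => f x * chi S x

/-- Fourier weight up to degree `k`: `W^{≤k}(f)`. -/
def weightLE (n k : ℕ) (f : (Fin n → Bool) → ℝ) : ℝ :=
  ∑ S ∈ Finset.univ.filter (fun S : Finset (Fin n) => S.card ≤ k), fourierCoef n f S ^ 2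

/-- Fourier weight strictly below degree `k`: `W^{<k}(f)`. -/
def weightLT (n k : ℕ) (f : (Fin n → Bool) → ℝ) : ℝ :=
  ∑ S ∈ Finset.univ.filter (fun S : Finset (Fin n) => S.card < k), fourierCoef n f S ^ 2

/-- The monomial `M_k(x) = ∏_{i=1}^k x_i`, viewed as a function on `{±1}^n`. -/
def monomial (n k : ℕ) : (Fin n → Bool) → ℝ :=
  fun x => ∏ i ∈ Finset.univ.filter (fun i : Fin n => (i : ℕ) < k), bsign (x i)

/-- The `N`-extension of `f : {±1}^n → ℝ` (for `n ≤ N`): ignore the last `N - n` coordinates. -/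
def extendFn (n N : ℕ) (f : (Fin n → Bool) → ℝ) : (Fin N → Bool) → ℝ :=
  fun x => f fun i => if h : (i : ℕ) < N then x ⟨i, h⟩ else false

/-- Cross-predictability of (the uniform distribution on) the orbit of `f` under coordinate
permutations, with uniform inputs: `CP(orb(f), U^N)`. -/
def orbitCP (N : ℕ) (f : (Fin N → Bool) → ℝ) : ℝ :=
  (∑ π : Equiv.Perm (Fin N), ∑ π' : Equiv.Perm (Fin N),
      (bExp N fun x => f (fun i => x (π i)) * f (fun i => x (π' i))) ^ 2) /
    (Fintype.card (Equiv.Perm (Fin N))) ^ 2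

/-- `N = n^{1+ε}` (rounded up). -/
def Ndim (ε : ℝ) (n : ℕ) : ℕ := ⌈(n : ℝ) ^ (1 + ε)⌉₊

/-!
Move the mean of the bias and of a fixed number of weights by `n^{-1/2}`, and shrink their variances
by a factor chosen so that every preactivation `wᵀx + b` has variance exactly `1`. Only a bounded
number of coordinates change, and each by an amount comparable to its own standard deviation, so the
new parameter law is at most a constant, independent of `n`, times the initial one. By Jensen's
inequality `INAL(f, σ)` is then at least a constant times
`(E_x[f(x) Σ(n^{-1/2} (∑_{i ∈ T} x_i + 1))])²`. For `f = M_S` with `S ⊆ T`, expand `Σ` at `0`: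
the moments `E_x[M_S(x) (∑_{i ∈ T} x_i + 1)^p]` vanish for `p < |S|` and are at least `1` for
`p ≥ |S|`, so the first `p ≥ |S|` with `Σ^{(p)}(0) ≠ 0` yields a main term of order `n^{-p/2}`.
-/

open scoped BigOperators Topology

/-! ### Domination of measures -/

lemma measure_pi_mono {ι : Type*} [Fintype ι] {α : ι → Type*} [∀ i, MeasurableSpace (α i)]
    {μ ν : ∀ i, Measure (α i)} (h : ∀ i, μ i ≤ ν i) : Measure.pi μ ≤ Measure.pi ν := by
  have houter : OuterMeasure.pi (fun i => (μ i).toOuterMeasure) ≤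
      OuterMeasure.pi fun i => (ν i).toOuterMeasure :=
    OuterMeasure.le_pi.2 fun s _ => (OuterMeasure.pi_pi_le _ s).trans
      (Finset.prod_le_prod' fun i _ => h i (s i))
  refine Measure.le_iff.2 fun s hs => ?_
  simpa only [Measure.pi, toMeasure_apply _ _ hs] using houter s

lemma measure_pi_smul {ι : Type*} [Fintype ι] {α : ι → Type*} [∀ i, MeasurableSpace (α i)]
    (μ : ∀ i, Measure (α i)) [∀ i, SigmaFinite (μ i)] (C : ι → ℝ≥0) :
    Measure.pi (fun i => C i • μ i) = (∏ i, C i) • Measure.pi μ := by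
  refine Measure.pi_eq fun s _ => ?_
  simp only [Measure.smul_apply, Measure.pi_pi, ENNReal.smul_def, smul_eq_mul,
    ENNReal.ofNNReal_finsetProd, Finset.prod_mul_distrib]

lemma sq_integral_le_of_le_smul {Ω : Type*} {mΩ : MeasurableSpace Ω} {μ ν : Measure Ω}
    [IsProbabilityMeasure ν] {C : ℝ≥0} (hνμ : ν ≤ C • μ) {F : Ω → ℝ} (hF : MemLp F 2 μ) :
    (∫ ω, F ω ∂ν) ^ 2 ≤ C * ∫ ω, F ω ^ 2 ∂μ := by
  have hFν : MemLp F 2 ν := hF.of_measure_le_smul ENNReal.coe_ne_top hνμ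
  have hjensen : (∫ ω, F ω ∂ν) ^ 2 ≤ ∫ ω, F ω ^ 2 ∂ν := by
    have hvar := variance_nonneg F ν
    rw [variance_eq_sub hFν] at hvar
    exact sub_nonneg.1 hvar
  calc (∫ ω, F ω ∂ν) ^ 2 ≤ ∫ ω, F ω ^ 2 ∂ν := hjensen
    _ ≤ ∫ ω, F ω ^ 2 ∂(C • μ) :=
      integral_mono_measure hνμ (Eventually.of_forall fun ω => sq_nonneg _)
        hF.integrable_sq.smul_measure_nnreal
    _ = C * ∫ ω, F ω ^ 2 ∂μ := integral_smul_nnreal_measure _ _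

/-- A constant `C` such that `N(m, w) ≤ C • N(m', v)` whenever `|m - m'| = |d|` and `0 < w < v`:
the supremum of the quotient of the two densities. -/
def gaussianDomConst (d : ℝ) (w v : ℝ≥0) : ℝ≥0 :=
  (√(v / w) * Real.exp (d ^ 2 / (2 * (v - w)))).toNNReal

lemma gaussianPDFReal_le_mul {m m' : ℝ} {w v : ℝ≥0} (hw : 0 < w) (hwv : w < v) (y : ℝ) :
    gaussianPDFReal m w y ≤ gaussianDomConst (m - m') w v * gaussianPDFReal m' v y := by
  have hv' : (0 : ℝ) < v := hw.trans hwv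
  have hwv' : (0 : ℝ) < v - w := sub_pos.2 hwv
  have hnorm : (√(2 * Real.pi * w))⁻¹ = √(v / w) * (√(2 * Real.pi * v))⁻¹ := by
    rw [← Real.sqrt_inv, ← Real.sqrt_inv, ← Real.sqrt_mul (by positivity)]
    congr 1
    field_simp
  have hexponent : -(y - m) ^ 2 / (2 * w) ≤
      (m - m') ^ 2 / (2 * (v - w)) + -(y - m') ^ 2 / (2 * v) := by
    have hsq : (m - m') ^ 2 / (2 * (v - w)) + -(y - m') ^ 2 / (2 * v) - -(y - m) ^ 2 / (2 * w) =
        ((v - w) * (y - m) - w * (m - m')) ^ 2 / (2 * (v - w) * w * v) := by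
      field_simp
      ring
    exact sub_nonneg.1 (hsq ▸ by positivity)
  rw [gaussianPDFReal, gaussianPDFReal, gaussianDomConst, Real.coe_toNNReal _ (by positivity)]
  calc (√(2 * Real.pi * w))⁻¹ * Real.exp (-(y - m) ^ 2 / (2 * w))
      ≤ (√(2 * Real.pi * w))⁻¹ *
          Real.exp ((m - m') ^ 2 / (2 * (v - w)) + -(y - m') ^ 2 / (2 * v)) := by gcongr
    _ = _ := by rw [hnorm, Real.exp_add]; ring

lemma gaussianReal_le_smul (m m' : ℝ) {w v : ℝ≥0} (hw : 0 < w) (hwv : w < v) :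
    gaussianReal m w ≤ gaussianDomConst (m - m') w v • gaussianReal m' v := by
  rw [gaussianReal_of_var_ne_zero _ hw.ne', gaussianReal_of_var_ne_zero _ (hw.trans hwv).ne',
    ← Measure.coe_nnreal_smul, ← withDensity_smul _ (measurable_gaussianPDF _ _)]
  refine withDensity_mono (Eventually.of_forall fun y => ?_)
  simp only [gaussianPDF, Pi.smul_apply, smul_eq_mul, ← ENNReal.ofReal_coe_nnreal]
  rw [← ENNReal.ofReal_mul NNReal.zero_le_coe]
  exact ENNReal.ofReal_le_ofReal (gaussianPDFReal_le_mul hw hwv y)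

lemma gaussianDomConst_scale {u : ℝ≥0} (hu : 0 < u) (d : ℝ) (w v : ℝ≥0) :
    gaussianDomConst (√u * d) (w * u) (v * u) = gaussianDomConst d w v := by
  have hu' : (u : ℝ) ≠ 0 := NNReal.coe_ne_zero.2 hu.ne'
  simp only [gaussianDomConst, NNReal.coe_mul, mul_pow, Real.sq_sqrt NNReal.zero_le_coe,
    mul_div_mul_right _ _ hu', ← sub_mul, ← mul_assoc, mul_comm (u : ℝ) (d ^ 2)]

lemma memLp_gaussianReal_of_lt {f : ℝ → ℝ} {p : ℝ≥0∞} {m' : ℝ} {v : ℝ≥0}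
    (hf : MemLp f p (gaussianReal m' v)) (m : ℝ) {w : ℝ≥0} (hw : 0 < w) (hwv : w < v) :
    MemLp f p (gaussianReal m w) :=
  hf.of_measure_le_smul ENNReal.coe_ne_top (gaussianReal_le_smul m m' hw hwv)

lemma PolyBounded.memLp_gaussianReal {σ : ℝ → ℝ} (hb : PolyBounded σ) (hm : Measurable σ)
    {p : ℝ≥0∞} (hp : p ≠ ∞) (m : ℝ) (v : ℝ≥0) : MemLp σ p (gaussianReal m v) := by
  obtain ⟨C, -, c, hc, hbd⟩ := hb
  have hpow : MemLp (fun x : ℝ => |x| ^ c) p (gaussianReal m v) := by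
    have hid := memLp_id_gaussianReal' (μ := m) (v := v) (p * c) (by finiteness)
    simpa [ENNReal.mul_div_cancel_right (Nat.cast_ne_zero.2 hc.ne') (ENNReal.natCast_ne_top c)]
      using hid.norm_rpow_div c
  refine ((hpow.const_mul C).add (memLp_const C)).mono hm.aestronglyMeasurable
    (Eventually.of_forall fun x => ?_)
  exact (hbd x).trans (le_abs_self _)

/-! ### Smoothness of the Gaussian smoothing -/

section Laplace

variable {Ω : Type*} {mΩ : MeasurableSpace Ω} {μ : Measure Ω} {X g : Ω → ℝ}

lemma contDiff_integral_exp_mul_of_nonneg (hg : 0 ≤ g)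
    (hint : ∀ t, Integrable (fun ω => Real.exp (t * X ω) * g ω) μ) :
    ContDiff ℝ ⊤ fun t => ∫ ω, Real.exp (t * X ω) * g ω ∂μ := by
  have hgm : AEMeasurable (fun ω => ENNReal.ofReal (g ω)) μ := by
    simpa using (hint 0).aemeasurable.ennreal_ofReal
  have hfin : ∀ᵐ ω ∂μ, ENNReal.ofReal (g ω) < ∞ := Eventually.of_forall fun _ => by finiteness
  have hdensity : ∀ t ω, (ENNReal.ofReal (g ω)).toReal • Real.exp (t * X ω) =
      Real.exp (t * X ω) * g ω := fun t ω => by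
    rw [ENNReal.toReal_ofReal (hg ω), smul_eq_mul, mul_comm]
  set ν := μ.withDensity fun ω => ENNReal.ofReal (g ω)
  have hexp : integrableExpSet X ν = Set.univ := by
    refine Set.eq_univ_of_forall fun t => ?_
    refine (integrable_withDensity_iff_integrable_smul₀' hgm hfin).2 ?_
    simpa only [hdensity] using hint t
  have hmgf : (fun t => ∫ ω, Real.exp (t * X ω) * g ω ∂μ) = mgf X ν := by
    funext t
    rw [mgf, integral_withDensity_eq_integral_toReal_smul₀ hgm hfin]
    simp only [hdensity]
  rw [hmgf]
  exact contDiff_iff_contDiffAt.2 fun t => (analyticAt_mgf (by simp [hexp])).contDiffAt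

lemma contDiff_integral_exp_mul
    (hint : ∀ t, Integrable (fun ω => Real.exp (t * X ω) * g ω) μ) :
    ContDiff ℝ ⊤ fun t => ∫ ω, Real.exp (t * X ω) * g ω ∂μ := by
  have hpos : ∀ t, Integrable (fun ω => Real.exp (t * X ω) * (g ω)⁺) μ := fun t => by
    simpa only [posPart_def, mul_max_of_nonneg _ _ (Real.exp_pos _).le, mul_zero]
      using (hint t).pos_part
  have hneg : ∀ t, Integrable (fun ω => Real.exp (t * X ω) * (g ω)⁻) μ := fun t => by
    simpa only [negPart_def, mul_max_of_nonneg _ _ (Real.exp_pos _).le, mul_zero, mul_neg]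
      using (hint t).neg_part
  have hsplit : (fun t => ∫ ω, Real.exp (t * X ω) * g ω ∂μ) = fun t =>
      (∫ ω, Real.exp (t * X ω) * (g ω)⁺ ∂μ) - ∫ ω, Real.exp (t * X ω) * (g ω)⁻ ∂μ := by
    funext t
    rw [← integral_sub (hpos t) (hneg t)]
    simp only [← mul_sub, posPart_sub_negPart]
  rw [hsplit]
  exact (contDiff_integral_exp_mul_of_nonneg (fun _ => posPart_nonneg _) hpos).sub
    (contDiff_integral_exp_mul_of_nonneg (fun _ => negPart_nonneg _) hneg)

end Laplace

lemma memLp_exp_mul_gaussianReal {p : ℝ≥0∞} (hp : p ≠ ∞) (t m : ℝ) (v : ℝ≥0) :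
    MemLp (fun y => Real.exp (t * y)) p (gaussianReal m v) := by
  rcases eq_or_ne p 0 with rfl | hp0
  · exact memLp_zero_iff_aestronglyMeasurable.2 (by fun_prop)
  refine (integrable_norm_rpow_iff (by fun_prop) hp0 hp).1 ?_
  refine (integrable_exp_mul_gaussianReal (p.toReal * t)).congr (Eventually.of_forall fun y => ?_)
  simp only [Real.norm_eq_abs, Real.abs_exp, ← Real.exp_mul]
  ring_nf

lemma integral_gaussianReal_eq_exp_mul (f : ℝ → ℝ) (t : ℝ) {v : ℝ≥0} (hv : v ≠ 0) :
    ∫ y, f y ∂gaussianReal t v =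
      Real.exp (-t ^ 2 / (2 * v)) * ∫ y, Real.exp (t / v * y) * f y ∂gaussianReal 0 v := by
  have hv' : (v : ℝ) ≠ 0 := NNReal.coe_ne_zero.2 hv
  rw [integral_gaussianReal_eq_integral_smul hv, integral_gaussianReal_eq_integral_smul hv,
    ← integral_const_mul]
  refine integral_congr_ae (Eventually.of_forall fun y => ?_)
  have hsquare : -(y - t) ^ 2 / (2 * v) =
      -t ^ 2 / (2 * v) + (t / v * y + -(y - 0) ^ 2 / (2 * v)) := by
    field_simp
    ring
  simp only [smul_eq_mul, gaussianPDFReal, hsquare, Real.exp_add]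
  ring

lemma gsmooth_eq_integral_gaussianReal (σ : ℝ → ℝ) (v t : ℝ) :
    gsmooth σ v t = ∫ y, σ y ∂gaussianReal t v.toNNReal := by
  rw [gsmooth, ← (measurableEmbedding_addRight t).integral_map, gaussianReal_map_add_const,
    zero_add]

lemma contDiff_gsmooth {σ : ℝ → ℝ} {v : ℝ} (hv : 0 < v)
    (hσ : MemLp σ 2 (gaussianReal 0 v.toNNReal)) : ContDiff ℝ ⊤ (gsmooth σ v) := by
  have hlaplace := contDiff_integral_exp_mul (X := id) fun t =>
    (memLp_exp_mul_gaussianReal (p := 2) (by simp) t 0 v.toNNReal).integrable_mul hσ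
  have htilt : gsmooth σ v = fun t => Real.exp (-t ^ 2 / (2 * v)) *
      ∫ y, Real.exp (t / v * y) * σ y ∂gaussianReal 0 v.toNNReal := by
    funext t
    rw [gsmooth_eq_integral_gaussianReal,
      integral_gaussianReal_eq_exp_mul σ t (Real.toNNReal_pos.2 hv).ne',
      Real.coe_toNNReal v hv.le]
  rw [htilt]
  exact ContDiff.mul (by fun_prop) (hlaplace.comp (contDiff_id.div_const v))

/-! ### Fourier characters of the cube -/

section SymmDiff

variable {α : Type*} [DecidableEq α] {s : Finset α} {i : α}

lemma symmDiff_singleton_of_mem (hi : i ∈ s) : symmDiff s {i} = s.erase i := by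
  grind [Finset.mem_symmDiff]

lemma symmDiff_singleton_of_notMem (hi : i ∉ s) : symmDiff s {i} = insert i s := by
  grind [Finset.mem_symmDiff]

lemma card_le_card_symmDiff_singleton_add_one (s : Finset α) (i : α) :
    #s ≤ #(symmDiff s {i}) + 1 := by
  by_cases hi : i ∈ s
  · rw [symmDiff_singleton_of_mem hi, Finset.card_erase_add_one hi]
  · rw [symmDiff_singleton_of_notMem hi, Finset.card_insert_of_notMem hi]
    lia

end SymmDiff

lemma bExp_eq_expect (n : ℕ) (g : (Fin n → Bool) → ℝ) : bExp n g = 𝔼 x, g x := by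
  simp [bExp, Fintype.expect_eq_sum_div_card]

lemma abs_bsign (b : Bool) : |bsign b| = 1 := by cases b <;> simp [bsign]

lemma bsign_mul_self (b : Bool) : bsign b * bsign b = 1 := by cases b <;> simp [bsign]

section Cube

variable {n : ℕ}

lemma abs_chi (S : Finset (Fin n)) (x : Fin n → Bool) : |chi S x| = 1 := by
  simp [chi, Finset.abs_prod, abs_bsign]

lemma chi_symmDiff_singleton (S : Finset (Fin n)) (i : Fin n) (x : Fin n → Bool) :
    chi (symmDiff S {i}) x = chi S x * bsign (x i) := by
  by_cases hi : i ∈ S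
  · rw [symmDiff_singleton_of_mem hi, chi, chi, ← Finset.prod_erase_mul S _ hi, mul_assoc,
      bsign_mul_self, mul_one]
  · rw [symmDiff_singleton_of_notMem hi, chi, chi, Finset.prod_insert hi, mul_comm]

lemma bExp_chi (S : Finset (Fin n)) : bExp n (chi S) = if S = ∅ then 1 else 0 := by
  split_ifs with hS
  · simp [hS, bExp_eq_expect, chi]
  · obtain ⟨i, hi⟩ := Finset.nonempty_iff_ne_empty.2 hS
    have hprod : ∑ x : Fin n → Bool, chi S x =
        ∏ j, ∑ b, if j ∈ S then bsign b else (1 : ℝ) := by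
      simp only [chi, Fintype.prod_sum, Finset.prod_ite_mem, Finset.univ_inter]
    rw [bExp, hprod, Finset.prod_eq_zero (Finset.mem_univ i) (by simp [hi, bsign]), zero_div]

lemma abs_bExp_chi_mul_le (S : Finset (Fin n)) {g : (Fin n → Bool) → ℝ} {B : ℝ}
    (hg : ∀ x, |g x| ≤ B) : |bExp n fun x => chi S x * g x| ≤ B := by
  rw [bExp_eq_expect]
  refine (Finset.abs_expect_le _ _).trans (Finset.expect_le Finset.univ_nonempty fun x _ => ?_)
  rw [abs_mul, abs_chi, one_mul]
  exact hg x

/-! ### Moments of biased sums -/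

/-- The preactivation at `x` of the neuron whose bias, and whose weights on `T`, are all `1`. The
bias makes powers of both parities correlate with every character supported on `T`. -/
def biasedSum (T : Finset (Fin n)) (x : Fin n → Bool) : ℝ := ∑ i ∈ T, bsign (x i) + 1

lemma abs_biasedSum_le (T : Finset (Fin n)) (x : Fin n → Bool) : |biasedSum T x| ≤ #T + 1 := by
  have hsum : |∑ i ∈ T, bsign (x i)| ≤ #T := by
    simpa [abs_bsign] using Finset.abs_sum_le_sum_abs (fun i => bsign (x i)) T
  calc |biasedSum T x| ≤ |∑ i ∈ T, bsign (x i)| + |1| := abs_add_le _ _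
    _ ≤ #T + 1 := by rw [abs_one]; gcongr

/-- The Fourier coefficient at `S` of the `p`-th power of `biasedSum T`. -/
def chiMoment (S T : Finset (Fin n)) (p : ℕ) : ℝ := bExp n fun x => chi S x * biasedSum T x ^ p

lemma chiMoment_zero (S T : Finset (Fin n)) : chiMoment S T 0 = if S = ∅ then 1 else 0 := by
  simp only [chiMoment, pow_zero, mul_one, bExp_chi]

lemma chiMoment_succ (S T : Finset (Fin n)) (p : ℕ) :
    chiMoment S T (p + 1) = ∑ i ∈ T, chiMoment (symmDiff S {i}) T p + chiMoment S T p := by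
  simp only [chiMoment, bExp_eq_expect]
  rw [← Finset.expect_sum_comm, ← Finset.expect_add_distrib]
  refine Finset.expect_congr rfl fun x _ => ?_
  simp only [chi_symmDiff_singleton, ← Finset.sum_mul, ← Finset.mul_sum]
  rw [pow_succ, biasedSum]
  ring

lemma chiMoment_nonneg (S T : Finset (Fin n)) (p : ℕ) : 0 ≤ chiMoment S T p := by
  induction p generalizing S with
  | zero => rw [chiMoment_zero]; positivity
  | succ p ih => rw [chiMoment_succ]; exact add_nonneg (Finset.sum_nonneg fun i _ => ih _) (ih S)

lemma chiMoment_eq_zero_of_lt {S : Finset (Fin n)} (T : Finset (Fin n)) {p : ℕ} (hp : p < #S) :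
    chiMoment S T p = 0 := by
  induction p generalizing S with
  | zero => rw [chiMoment_zero, if_neg (Finset.card_pos.1 hp).ne_empty]
  | succ p ih =>
    have hflip : ∀ i ∈ T, chiMoment (symmDiff S {i}) T p = 0 := fun i _ =>
      ih (by have := card_le_card_symmDiff_singleton_add_one S i; lia)
    rw [chiMoment_succ, Finset.sum_eq_zero hflip, ih (Nat.lt_of_succ_lt hp), add_zero]

lemma one_le_chiMoment {S T : Finset (Fin n)} (hST : S ⊆ T) {p : ℕ} (hp : #S ≤ p) :
    1 ≤ chiMoment S T p := by
  induction p generalizing S with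
  | zero => rw [chiMoment_zero, if_pos (Finset.card_eq_zero.1 (Nat.le_zero.1 hp))]
  | succ p ih =>
    have hflips : ∀ i ∈ T, 0 ≤ chiMoment (symmDiff S {i}) T p := fun i _ => chiMoment_nonneg _ _ _
    rw [chiMoment_succ]
    rcases hp.lt_or_eq with hlt | heq
    · exact le_add_of_nonneg_of_le (Finset.sum_nonneg hflips) (ih hST (Nat.le_of_lt_succ hlt))
    · obtain ⟨i, hi⟩ : S.Nonempty := Finset.card_pos.1 (heq ▸ p.succ_pos)
      have hdrop : 1 ≤ chiMoment (symmDiff S {i}) T p := by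
        rw [symmDiff_singleton_of_mem hi]
        exact ih ((Finset.erase_subset i S).trans hST)
          (by rw [Finset.card_erase_of_mem hi, heq, Nat.add_sub_cancel])
      exact le_add_of_le_of_nonneg (hdrop.trans (Finset.single_le_sum hflips (hST hi)))
        (chiMoment_nonneg _ _ _)

lemma bExp_chi_mul_sum_range {S : Finset (Fin n)} (T : Finset (Fin n)) {a : ℕ → ℝ} {p : ℕ}
    (ha : ∀ j, #S ≤ j → j < p → a j = 0) (h : ℝ) :
    (bExp n fun x => chi S x * ∑ j ∈ range (p + 1), a j * (h * biasedSum T x) ^ j) =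
      a p * h ^ p * chiMoment S T p := by
  have hterms : (bExp n fun x => chi S x * ∑ j ∈ range (p + 1), a j * (h * biasedSum T x) ^ j) =
      ∑ j ∈ range (p + 1), a j * h ^ j * chiMoment S T j := by
    simp only [chiMoment, bExp_eq_expect, Finset.mul_expect]
    rw [← Finset.expect_sum_comm]
    refine Finset.expect_congr rfl fun x _ => ?_
    rw [Finset.mul_sum]
    exact Finset.sum_congr rfl fun j _ => by ring
  rw [hterms, Finset.sum_range_succ, Finset.sum_eq_zero, zero_add]
  intro j hj
  rcases lt_or_ge j #S with hlt | hge
  · rw [chiMoment_eq_zero_of_lt T hlt, mul_zero]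
  · rw [ha j hge (Finset.mem_range.1 hj), zero_mul, zero_mul]

end Cube

/-! ### Taylor expansion -/

lemma sub_sum_iteratedDeriv_isLittleO {f : ℝ → ℝ} {p : ℕ} (hf : ContDiff ℝ p f) :
    (fun y => f y - ∑ j ∈ range (p + 1), iteratedDeriv j f 0 / j.factorial * y ^ j) =o[𝓝 0]
      fun y => y ^ p := by
  have htaylor := taylor_isLittleO_univ (f := f) (x₀ := 0) (n := p) hf
  simp only [sub_zero] at htaylor
  refine htaylor.congr_left fun y => ?_
  rw [taylor_within_apply]
  simp only [iteratedDerivWithin_univ, smul_eq_mul, sub_zero]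
  congr 1
  exact Finset.sum_congr rfl fun j _ => by ring

lemma eventually_forall_abs_mul_le {R : ℝ → ℝ} {p : ℕ} (hR : R =o[𝓝 0] fun y => y ^ p)
    (r : ℝ) {ε : ℝ} (hε : 0 < ε) :
    ∀ᶠ h in 𝓝[>] 0, ∀ y, |y| ≤ r → |R (h * y)| ≤ ε * h ^ p := by
  rcases lt_or_ge r 0 with hr | hr
  · exact Eventually.of_forall fun h y hy => absurd (hy.trans_lt hr) (abs_nonneg y).not_gt
  obtain ⟨δ, hδ, hball⟩ := Metric.eventually_nhds_iff.1
    (hR.def (c := ε / (r + 1) ^ p) (by positivity))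
  have hsmall : ∀ᶠ h : ℝ in 𝓝[>] 0, h < δ / (r + 1) :=
    eventually_nhdsWithin_of_eventually_nhds (gt_mem_nhds (by positivity))
  filter_upwards [hsmall, self_mem_nhdsWithin] with h hhδ hh y hy
  replace hh : 0 < h := hh
  have hhy : |h * y| ≤ h * (r + 1) := by
    rw [abs_mul, abs_of_pos hh]
    gcongr
    linarith
  have hlt : dist (h * y) 0 < δ := by
    rw [Real.dist_0_eq_abs]
    exact hhy.trans_lt ((lt_div_iff₀ (by positivity)).1 hhδ)
  calc |R (h * y)| ≤ ε / (r + 1) ^ p * |h * y| ^ p := by simpa using hball hlt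
    _ ≤ ε / (r + 1) ^ p * (h * (r + 1)) ^ p := by gcongr
    _ = ε * h ^ p := by rw [mul_pow]; field_simp

lemma exists_pos_mul_pow_le_abs_bExp_chi_mul {f : ℝ → ℝ} {p k : ℕ} (hf : ContDiff ℝ p f)
    (hkp : k ≤ p) (hp : iteratedDeriv p f 0 ≠ 0)
    (hlow : ∀ j, k ≤ j → j < p → iteratedDeriv j f 0 = 0) (t : ℕ) :
    ∃ c > 0, ∀ᶠ h in 𝓝[>] 0, ∀ (n : ℕ) (S T : Finset (Fin n)), #S = k → #T = t → S ⊆ T →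
      c * h ^ p ≤ |bExp n fun x => chi S x * f (h * biasedSum T x)| := by
  set a : ℕ → ℝ := fun j => iteratedDeriv j f 0 / j.factorial with ha
  have hap : 0 < |a p| := abs_pos.2 (div_ne_zero hp (by positivity))
  set R : ℝ → ℝ := fun y => f y - ∑ j ∈ range (p + 1), a j * y ^ j with hRdef
  refine ⟨|a p| / 2, by positivity, ?_⟩
  filter_upwards [eventually_forall_abs_mul_le (sub_sum_iteratedDeriv_isLittleO hf) (t + 1)
    (half_pos hap), self_mem_nhdsWithin] with h hR hh n S T hS hT hST
  have hhp : 0 < h ^ p := pow_pos hh p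
  have hsplit : (bExp n fun x => chi S x * f (h * biasedSum T x)) =
      a p * h ^ p * chiMoment S T p + bExp n fun x => chi S x * R (h * biasedSum T x) := by
    rw [← bExp_chi_mul_sum_range T (fun j hj hjp => by simp [ha, hlow j (hS ▸ hj) hjp])]
    simp only [bExp_eq_expect, ← Finset.expect_add_distrib, ← mul_add, hRdef, add_sub_cancel]
  have hmain : |a p| * h ^ p ≤ |a p * h ^ p * chiMoment S T p| := by
    rw [abs_mul, abs_mul, abs_of_pos hhp]
    exact le_mul_of_one_le_right (mul_pos hap hhp).le
      ((one_le_chiMoment hST (hS ▸ hkp)).trans (le_abs_self _))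
  have hrem : |bExp n fun x => chi S x * R (h * biasedSum T x)| ≤ |a p| / 2 * h ^ p :=
    abs_bExp_chi_mul_le S fun x => hR _ (hT ▸ abs_biasedSum_le T x)
  rw [hsplit]
  calc |a p| / 2 * h ^ p = |a p| * h ^ p - |a p| / 2 * h ^ p := by ring
    _ ≤ |a p * h ^ p * chiMoment S T p| - |bExp n fun x => chi S x * R (h * biasedSum T x)| := by
      gcongr
    _ ≤ _ := abs_sub_abs_le_abs_add _ _

/-! ### Gaussian parameter laws -/

/-- The law of the parameters `(w, b)` of a neuron with independent Gaussian weights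
`w i ∼ N(m i, v i)` and bias `b ∼ N(c, u)`. -/
def gaussianParams {ι : Type*} [Fintype ι] (m : ι → ℝ) (v : ι → ℝ≥0) (c : ℝ) (u : ℝ≥0) :
    Measure ((ι → ℝ) × ℝ) :=
  (Measure.pi fun i => gaussianReal (m i) (v i)).prod (gaussianReal c u)

instance {ι : Type*} [Fintype ι] (m : ι → ℝ) (v : ι → ℝ≥0) (c : ℝ) (u : ℝ≥0) :
    IsProbabilityMeasure (gaussianParams m v c u) := by
  unfold gaussianParams
  infer_instance

lemma initMeasure_eq_gaussianParams (n : ℕ) :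
    initMeasure n = gaussianParams (fun _ => 0) (fun _ => (n : ℝ≥0)⁻¹) 0 (n : ℝ≥0)⁻¹ := rfl

lemma pi_gaussianReal_map_sum {ι : Type*} [Fintype ι] (m : ι → ℝ) (v : ι → ℝ≥0) :
    (Measure.pi fun i => gaussianReal (m i) (v i)).map (fun w => ∑ i, w i) =
      gaussianReal (∑ i, m i) (∑ i, v i) := by
  refine Measure.ext_of_charFun (funext fun t => ?_)
  rw [charFun_map_sum_pi_eq_prod]
  simp only [Finset.prod_apply, charFun_gaussianReal, ← Complex.exp_sum]
  push_cast
  rw [Finset.sum_sub_distrib, Finset.mul_sum, Finset.sum_mul, ← Finset.sum_div, Finset.sum_mul]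

lemma gaussianReal_map_mul_bsign (m : ℝ) (v : ℝ≥0) (b : Bool) :
    (gaussianReal m v).map (· * bsign b) = gaussianReal (m * bsign b) v := by
  rw [gaussianReal_map_mul_const, mul_comm (bsign b)]
  congr 1
  ext
  simp [sq, bsign_mul_self]

section Params

variable {n : ℕ} (m : Fin n → ℝ) (v : Fin n → ℝ≥0) (c : ℝ) (u : ℝ≥0)

lemma pi_gaussianReal_map_sum_mul_bsign (x : Fin n → Bool) :
    (Measure.pi fun i => gaussianReal (m i) (v i)).map (fun w => ∑ i, w i * bsign (x i)) =
      gaussianReal (∑ i, m i * bsign (x i)) (∑ i, v i) := by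
  have hsigned : (Measure.pi fun i => gaussianReal (m i) (v i)).map
      (fun w i => w i * bsign (x i)) =
      Measure.pi fun i => gaussianReal (m i * bsign (x i)) (v i) := by
    rw [Measure.pi_map_pi (f := fun i y => y * bsign (x i)) fun i => by fun_prop]
    simp only [gaussianReal_map_mul_bsign]
  rw [← pi_gaussianReal_map_sum, ← hsigned, Measure.map_map (by fun_prop) (by fun_prop)]
  rfl

lemma gaussianParams_map_preactivation (x : Fin n → Bool) :
    (gaussianParams m v c u).map (fun θ => ∑ i, θ.1 i * bsign (x i) + θ.2) =
      gaussianReal (∑ i, m i * bsign (x i) + c) (∑ i, v i + u) := by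
  have hindep := indepFun_prod (μ := Measure.pi fun i => gaussianReal (m i) (v i))
    (ν := gaussianReal c u) (X := fun w => ∑ i, w i * bsign (x i)) (Y := id)
    (by fun_prop) measurable_id
  refine gaussianReal_add_gaussianReal_of_indepFun hindep ?_ ?_
  · have hweights : MeasurePreserving (fun w => ∑ i, w i * bsign (x i))
        (Measure.pi fun i => gaussianReal (m i) (v i)) _ :=
      ⟨by fun_prop, pi_gaussianReal_map_sum_mul_bsign m v x⟩
    exact (hweights.comp measurePreserving_fst).map_eq
  · exact measurePreserving_snd.map_eq

variable {m v c u}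

/-- The correlation of the target `f` with a neuron with parameters `θ = (w, b)`, whose second
moment under the initialization is `INAL n f σ`. -/
def alignment (f : (Fin n → Bool) → ℝ) (σ : ℝ → ℝ) (θ : (Fin n → ℝ) × ℝ) : ℝ :=
  bExp n fun x => f x * σ (∑ i, θ.1 i * bsign (x i) + θ.2)

lemma memLp_alignment (f : (Fin n → Bool) → ℝ) {σ : ℝ → ℝ} {p : ℝ≥0∞}
    (hσ : ∀ x : Fin n → Bool,
      MemLp σ p (gaussianReal (∑ i, m i * bsign (x i) + c) (∑ i, v i + u))) :
    MemLp (alignment f σ) p (gaussianParams m v c u) := by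
  unfold alignment bExp
  simp only [div_eq_mul_inv]
  refine (memLp_finsetSum _ fun x _ => MemLp.const_mul ?_ (f x)).mul_const _
  have hx := hσ x
  rw [← gaussianParams_map_preactivation] at hx
  exact hx.comp_of_map (by fun_prop)

lemma integral_alignment (f : (Fin n → Bool) → ℝ) {σ : ℝ → ℝ}
    (hσ : ∀ x : Fin n → Bool,
      Integrable σ (gaussianReal (∑ i, m i * bsign (x i) + c) (∑ i, v i + u))) :
    ∫ θ, alignment f σ θ ∂gaussianParams m v c u = bExp n fun x =>
      f x * ∫ y, σ y ∂gaussianReal (∑ i, m i * bsign (x i) + c) (∑ i, v i + u) := by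
  simp only [← gaussianParams_map_preactivation] at hσ ⊢
  have hterm : ∀ x : Fin n → Bool, Integrable
      (fun θ => f x * σ (∑ i, θ.1 i * bsign (x i) + θ.2)) (gaussianParams m v c u) :=
    fun x => ((hσ x).comp_aemeasurable (by fun_prop)).const_mul (f x)
  simp only [alignment, bExp]
  rw [integral_div, integral_finsetSum _ fun x _ => hterm x]
  congr 1
  refine Finset.sum_congr rfl fun x _ => ?_
  rw [integral_const_mul, integral_map (by fun_prop) (hσ x).aestronglyMeasurable]

end Params

/-! ### The shifted initialization -/

section Shifted

variable {n : ℕ} {T : Finset (Fin n)}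

/-- The initialization of `initMeasure n` with the bias and the weights on `T` moved by one standard
deviation; their variances are shrunk by `|T| / (|T| + 1)`, which cancels the contribution of the
bias to the variance of the preactivation. -/
def shiftedInit (T : Finset (Fin n)) : Measure ((Fin n → ℝ) × ℝ) :=
  gaussianParams (fun i => if i ∈ T then √(n : ℝ)⁻¹ else 0)
    (fun i => if i ∈ T then #T / (#T + 1) * (n : ℝ≥0)⁻¹ else (n : ℝ≥0)⁻¹)
    √(n : ℝ)⁻¹ (#T / (#T + 1) * (n : ℝ≥0)⁻¹)

instance (T : Finset (Fin n)) : IsProbabilityMeasure (shiftedInit T) := by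
  unfold shiftedInit
  infer_instance

lemma shiftedInit_mean_preactivation (T : Finset (Fin n)) (x : Fin n → Bool) :
    ∑ i, (if i ∈ T then √(n : ℝ)⁻¹ else 0) * bsign (x i) + √(n : ℝ)⁻¹ =
      √(n : ℝ)⁻¹ * biasedSum T x := by
  simp only [biasedSum, ite_mul, zero_mul, Finset.sum_ite_mem, Finset.univ_inter,
    ← Finset.mul_sum]
  ring

lemma shiftedInit_variance_preactivation (hT : T.Nonempty) :
    ∑ i, (if i ∈ T then #T / (#T + 1) * (n : ℝ≥0)⁻¹ else (n : ℝ≥0)⁻¹) +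
      #T / (#T + 1) * (n : ℝ≥0)⁻¹ = 1 := by
  have hn : (0 : ℝ≥0) < n := Nat.cast_pos.2 hT.choose.pos
  have hcard : (#T : ℝ≥0) + #Tᶜ = n := by
    exact_mod_cast (Finset.card_add_card_compl T).trans (Fintype.card_fin n)
  have hsum : ∑ i, (if i ∈ T then #T / (#T + 1) * (n : ℝ≥0)⁻¹ else (n : ℝ≥0)⁻¹) =
      #T * (#T / (#T + 1) * (n : ℝ≥0)⁻¹) + #Tᶜ * (n : ℝ≥0)⁻¹ := by
    simp [Finset.sum_ite, Finset.filter_not, Finset.compl_eq_univ_sdiff]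
  calc _ = ((#T : ℝ≥0) + #Tᶜ) * (n : ℝ≥0)⁻¹ := by rw [hsum]; field_simp; ring
    _ = 1 := by rw [hcard, mul_inv_cancel₀ hn.ne']

/-- A constant `C` with `shiftedInit T ≤ C • initMeasure n` for every `n` and every nonempty `T`
with `#T = t`. -/
def shiftedInitDomConst (t : ℕ) : ℝ≥0 := gaussianDomConst 1 (t / (t + 1)) 1 ^ (t + 1)

lemma gaussianReal_sqrt_le_smul {s u : ℝ≥0} (hs : 0 < s) (hs1 : s < 1) (hu : 0 < u) :
    gaussianReal √u (s * u) ≤ gaussianDomConst 1 s 1 • gaussianReal 0 u := by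
  have hscale : gaussianDomConst (√u - 0) (s * u) u = gaussianDomConst 1 s 1 := by
    simpa using gaussianDomConst_scale hu 1 s 1
  exact hscale ▸ gaussianReal_le_smul √u 0 (mul_pos hs hu) (mul_lt_of_lt_one_left hu hs1)

lemma shiftedInit_le_smul_initMeasure (hT : T.Nonempty) :
    shiftedInit T ≤ shiftedInitDomConst #T • initMeasure n := by
  have hu : 0 < (n : ℝ≥0)⁻¹ := inv_pos.2 (Nat.cast_pos.2 hT.choose.pos)
  set C := gaussianDomConst 1 (#T / (#T + 1) : ℝ≥0) 1
  have hcoord : gaussianReal √(n : ℝ)⁻¹ (#T / (#T + 1) * (n : ℝ≥0)⁻¹) ≤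
      C • gaussianReal 0 (n : ℝ≥0)⁻¹ := by
    have hcard : (0 : ℝ≥0) < #T := Nat.cast_pos.2 hT.card_pos
    simpa using gaussianReal_sqrt_le_smul (s := #T / (#T + 1)) (div_pos hcard (by positivity))
      ((div_lt_one (by positivity)).2 (lt_add_one _)) hu
  have hweights : Measure.pi (fun i => gaussianReal (if i ∈ T then √(n : ℝ)⁻¹ else 0)
        (if i ∈ T then #T / (#T + 1) * (n : ℝ≥0)⁻¹ else (n : ℝ≥0)⁻¹)) ≤
      C ^ #T • Measure.pi fun _ : Fin n => gaussianReal 0 (n : ℝ≥0)⁻¹ := by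
    rw [← Finset.prod_const, ← Finset.univ_inter T, ← Finset.prod_ite_mem, ← measure_pi_smul]
    refine measure_pi_mono fun i => ?_
    by_cases hi : i ∈ T
    · simpa [hi] using hcoord
    · simp [hi]
  calc shiftedInit T ≤ _ := Measure.prod_mono hweights hcoord
    _ = _ := by
      rw [Measure.prod_smul_left, Measure.prod_smul_right, smul_smul, ← pow_succ]
      rfl

theorem sq_bExp_mul_gsmooth_le_inal (f : (Fin n → Bool) → ℝ) {σ : ℝ → ℝ}
    (hσ : MemLp σ 2 (gaussianReal 0 (1 + (n : ℝ≥0)⁻¹))) (hT : T.Nonempty) :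
    (bExp n fun x => f x * gsmooth σ 1 (√(n : ℝ)⁻¹ * biasedSum T x)) ^ 2 ≤
      shiftedInitDomConst #T * INAL n f σ := by
  have hn : (0 : ℝ≥0) < n := Nat.cast_pos.2 hT.choose.pos
  have hσ1 : ∀ a, MemLp σ 2 (gaussianReal a 1) := fun a =>
    memLp_gaussianReal_of_lt hσ a one_pos (lt_add_of_pos_right 1 (inv_pos.2 hn))
  have hinit : MemLp (alignment f σ) 2 (initMeasure n) := by
    rw [initMeasure_eq_gaussianParams]
    refine memLp_alignment f fun x => ?_
    simpa [mul_inv_cancel₀ hn.ne'] using hσ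
  have hmean : ∫ θ, alignment f σ θ ∂shiftedInit T =
      bExp n fun x => f x * gsmooth σ 1 (√(n : ℝ)⁻¹ * biasedSum T x) := by
    rw [shiftedInit, integral_alignment] <;>
      simp only [shiftedInit_mean_preactivation, shiftedInit_variance_preactivation hT]
    · simp only [gsmooth_eq_integral_gaussianReal, Real.toNNReal_one]
    · exact fun x => (hσ1 _).integrable one_le_two
  rw [← hmean]
  exact sq_integral_le_of_le_smul (shiftedInit_le_smul_initMeasure hT) hinit

end Shifted

lemma tendsto_sqrt_inv_natCast_nhdsGT : Tendsto (fun n : ℕ => √(n : ℝ)⁻¹) atTop (𝓝[>] 0) := by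
  refine tendsto_nhdsWithin_iff.2 ⟨?_, ?_⟩
  · simpa using (tendsto_inv_atTop_nhds_zero_nat (𝕜 := ℝ)).sqrt
  · filter_upwards [eventually_gt_atTop 0] with n hn
    exact Real.sqrt_pos.2 (inv_pos.2 (Nat.cast_pos.2 hn))

lemma inv_pow_isBigO_inal_chi {σ : ℝ → ℝ} {v : ℝ≥0} (hv : 1 < v)
    (hσ : MemLp σ 2 (gaussianReal 0 v)) {k p : ℕ} (hkp : k ≤ p)
    (hp : iteratedDeriv p (gsmooth σ 1) 0 ≠ 0)
    (hlow : ∀ j, k ≤ j → j < p → iteratedDeriv j (gsmooth σ 1) 0 = 0)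
    {S : (n : ℕ) → Finset (Fin n)} (hS : ∀ᶠ n in atTop, #(S n) = k) :
    (fun n : ℕ => ((n : ℝ) ^ p)⁻¹) =O[atTop] fun n => INAL n (chi (S n)) σ := by
  have hsmooth : ContDiff ℝ p (gsmooth σ 1) :=
    (contDiff_gsmooth one_pos (by simpa using memLp_gaussianReal_of_lt hσ 0 one_pos hv)).of_le
      le_top
  obtain ⟨c, hc, hexpand⟩ := exists_pos_mul_pow_le_abs_bExp_chi_mul hsmooth hkp hp hlow (k + 1)
  have hvar : ∀ᶠ n : ℕ in atTop, 1 + (n : ℝ≥0)⁻¹ < v := by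
    have hlim : Tendsto (fun n : ℕ => 1 + (n : ℝ≥0)⁻¹) atTop (𝓝 1) := by
      simpa using (tendsto_inv_atTop_nhds_zero_nat (𝕜 := ℝ≥0)).const_add 1
    exact hlim.eventually_lt_const hv
  refine IsBigO.of_bound (shiftedInitDomConst (k + 1) / c ^ 2) ?_
  filter_upwards [tendsto_sqrt_inv_natCast_nhdsGT.eventually hexpand, hvar, hS,
    eventually_gt_atTop k] with n hcorr hnv hSn hkn
  obtain ⟨T, hST, hTcard⟩ := Finset.exists_superset_card_eq (s := S n) (n := k + 1)
    (by lia) (by simpa using hkn)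
  have hTne : T.Nonempty := Finset.card_pos.1 (hTcard ▸ k.succ_pos)
  have halign := sq_bExp_mul_gsmooth_le_inal (chi (S n))
    (memLp_gaussianReal_of_lt hσ 0 (by positivity) hnv) hTne
  rw [Real.norm_of_nonneg (by positivity), div_mul_eq_mul_div, le_div_iff₀ (by positivity)]
  calc ((n : ℝ) ^ p)⁻¹ * c ^ 2 = (c * √(n : ℝ)⁻¹ ^ p) ^ 2 := by
        rw [mul_pow, ← pow_mul, mul_comm p 2, pow_mul, Real.sq_sqrt (by positivity), inv_pow,
          mul_comm]
    _ ≤ (bExp n fun x => chi (S n) x * gsmooth σ 1 (√(n : ℝ)⁻¹ * biasedSum T x)) ^ 2 := by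
        rw [← sq_abs (bExp _ _)]
        gcongr
        exact hcorr n (S n) T hSn hTcard hST
    _ ≤ shiftedInitDomConst (k + 1) * INAL n (chi (S n)) σ := hTcard ▸ halign
    _ ≤ shiftedInitDomConst (k + 1) * ‖INAL n (chi (S n)) σ‖ := by
        gcongr
        exact Real.le_norm_self _

theorem inal_monomial_lower_bound_general {σ : ℝ → ℝ} {v : ℝ≥0} (hv : 1 < v)
    (hσ : MemLp σ 2 (gaussianReal 0 v)) {k P : ℕ} (hkP : k ≤ P)
    (hP : iteratedDeriv P (gsmooth σ 1) 0 ≠ 0)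
    {S : (n : ℕ) → Finset (Fin n)} (hS : ∀ᶠ n in atTop, #(S n) = k) :
    (fun n : ℕ => ((n : ℝ) ^ P)⁻¹) =O[atTop] fun n => INAL n (chi (S n)) σ := by
  classical
  have hex : ∃ p, k ≤ p ∧ iteratedDeriv p (gsmooth σ 1) 0 ≠ 0 := ⟨P, hkP, hP⟩
  obtain ⟨hkp, hp⟩ := Nat.find_spec hex
  have hlow : ∀ j, k ≤ j → j < Nat.find hex → iteratedDeriv j (gsmooth σ 1) 0 = 0 :=
    fun j hkj hj => not_not.1 fun hne => Nat.find_min hex hj ⟨hkj, hne⟩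
  refine IsBigO.trans (IsBigO.of_bound 1 ?_) (inv_pow_isBigO_inal_chi hv hσ hkp hp hlow hS)
  filter_upwards [eventually_ge_atTop 1] with n hn
  have hn1 : (1 : ℝ) ≤ n := Nat.one_le_cast.2 hn
  rw [one_mul, Real.norm_of_nonneg (by positivity), Real.norm_of_nonneg (by positivity)]
  gcongr
  exact Nat.find_min' hex ⟨hkP, hP⟩

/-- For expressive `σ`, every `k ≥ 0` and every `P ≥ k` with
`Σ^{(P)}(0) ≠ 0` (where `Σ` is the Gaussian smoothing of `σ`), it holds that
`INAL(M_k, σ) = Ω(n^{-P})` as `n → ∞`. -/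
theorem inal_monomial_lower_bound
    (σ : ℝ → ℝ) (hσ : Expressive σ) (k P : ℕ) (hkP : k ≤ P)
    (hP : iteratedDeriv P (gsmooth σ 1) 0 ≠ 0) :
    (fun n : ℕ => ((n : ℝ) ^ P)⁻¹) =O[atTop]
      fun n : ℕ => INAL n (monomial n k) σ :=
  inal_monomial_lower_bound_general one_lt_two
    (hσ.2.1.memLp_gaussianReal hσ.1 ENNReal.ofNat_ne_top 0 2) hkP hP
    ((eventually_ge_atTop k).mono fun n hkn => by rw [Fin.card_filter_val_lt, min_eq_right hkn])
end
end

section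
/- Let ε > 0 and let (f_n) be a family of Boolean functions f_n : {±1}^n → {±1} such that for some universal constant c and every fixed k it holds that W^{≤k}(f_n) = O(n^{k-c}). Let f̄_n denote the N-extension of f_n for N = n^{1+ε}. Then CP(orb(f̄_n), U^N) = O(n^{-(ε/(1+ε))·c}). -/
open MeasureTheory ProbabilityTheory Filter Finset Asymptotics
open scoped NNReal ENNReal

noncomputable section

/-!
Write `F = f̄ ∘ π` and `F' = f̄ ∘ π'`. By Plancherel, `E[F F']` only involves Fourier coefficients
on sets contained in the relevant coordinates of both functions, so Cauchy–Schwarz bounds its square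
by `E[f²] ∑_S f̂(S)² 1[π(S) ⊆ π'([n])]`. A random permutation maps a set of size `k` into a given
set of size `n` with probability `(n choose k) / (N choose k) ≤ (n / N)^k`, hence the
cross-predictability is at most `E[f²]` times the noise stability `∑_S (n / N)^|S| f̂(S)²`.
Since `n / N ≤ n^(-ε)`, degree `k < c` contributes `O(n^(k - c - ε k))` and the degrees `≥ c`
contribute `O(n^(-ε c))`; all of these are `O(n^(-min(ε, 1) c))`, which is stronger than the
exponent `ε / (1 + ε)`.
-/

section Fourier

variable {m n N : ℕ}

lemma bExp_sum_const_mul {ι : Type*} (s : Finset ι) (c : ι → ℝ) (g : ι → (Fin n → Bool) → ℝ) :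
    bExp n (fun x => ∑ i ∈ s, c i * g i x) = ∑ i ∈ s, c i * bExp n (g i) := by
  simp only [bExp, mul_div_assoc', Finset.mul_sum]
  rw [Finset.sum_comm, Finset.sum_div]

lemma bExp_nonneg {g : (Fin n → Bool) → ℝ} (hg : ∀ x, 0 ≤ g x) : 0 ≤ bExp n g :=
  div_nonneg (Finset.sum_nonneg fun x _ => hg x) (by positivity)

lemma bExp_prod (g : Fin n → Bool → ℝ) :
    bExp n (fun x => ∏ i, g i (x i)) = ∏ i, (g i true + g i false) / 2 := by
  simp [bExp, ← Fintype.prod_sum, Finset.prod_div_distrib]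

lemma chi_eq_prod_ite (S : Finset (Fin n)) (x : Fin n → Bool) :
    chi S x = ∏ i, if i ∈ S then bsign (x i) else 1 := by
  simp [chi, Finset.prod_ite_mem]

lemma bExp_chi_mul_chi (S T : Finset (Fin n)) :
    bExp n (fun x => chi S x * chi T x) = if S = T then 1 else 0 := by
  have average (i : Fin n) :
      ((if i ∈ S then bsign true else 1) * (if i ∈ T then bsign true else 1) +
        (if i ∈ S then bsign false else 1) * (if i ∈ T then bsign false else 1)) / 2 =
      if i ∈ S ↔ i ∈ T then (1 : ℝ) else 0 := by
    by_cases hS : i ∈ S <;> by_cases hT : i ∈ T <;> norm_num [hS, hT, bsign]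
  simp only [chi_eq_prod_ite, ← Finset.prod_mul_distrib]
  rw [bExp_prod fun i b => (if i ∈ S then bsign b else 1) * (if i ∈ T then bsign b else 1)]
  simp only [average, Fintype.prod_ite_zero, Finset.prod_const_one, Finset.ext_iff]

lemma sum_chi_mul_chi (x y : Fin n → Bool) :
    ∑ S, chi S x * chi S y = if x = y then 2 ^ n else 0 := by
  have one_add_bsign_mul_bsign (a b : Bool) :
      1 + bsign a * bsign b = if a = b then 2 else 0 := by
    cases a <;> cases b <;> norm_num [bsign]
  calc ∑ S, chi S x * chi S y = ∏ i, (1 + bsign (x i) * bsign (y i)) := by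
        simp only [Finset.prod_one_add, Finset.powerset_univ, chi, Finset.prod_mul_distrib]
    _ = if x = y then 2 ^ n else 0 := by
        simp [one_add_bsign_mul_bsign, Fintype.prod_ite_zero, funext_iff]

lemma sum_fourierCoef_mul_chi (f : (Fin n → Bool) → ℝ) (x : Fin n → Bool) :
    ∑ S, fourierCoef n f S * chi S x = f x := by
  calc ∑ S, fourierCoef n f S * chi S x
      = bExp n fun y => ∑ S, chi S x * (f y * chi S y) := by
        rw [bExp_sum_const_mul]
        simp only [fourierCoef, mul_comm]
    _ = bExp n fun y => f y * ∑ S, chi S y * chi S x := by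
        simp only [Finset.mul_sum, mul_comm, mul_left_comm]
    _ = f x := by simp [bExp, sum_chi_mul_chi]

lemma sum_fourierCoef_mul_fourierCoef (f g : (Fin n → Bool) → ℝ) :
    ∑ S, fourierCoef n f S * fourierCoef n g S = bExp n fun x => f x * g x := by
  calc ∑ S, fourierCoef n f S * fourierCoef n g S
      = bExp n fun x => ∑ S, fourierCoef n f S * (g x * chi S x) :=
        (bExp_sum_const_mul _ _ fun S x => g x * chi S x).symm
    _ = bExp n fun x => g x * ∑ S, fourierCoef n f S * chi S x := by
        simp only [Finset.mul_sum, mul_left_comm]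
    _ = bExp n fun x => f x * g x := by simp only [sum_fourierCoef_mul_chi, mul_comm (g _)]

lemma sum_fourierCoef_sq (f : (Fin n → Bool) → ℝ) :
    ∑ S, fourierCoef n f S ^ 2 = bExp n fun x => f x ^ 2 := by
  simp only [sq, sum_fourierCoef_mul_fourierCoef]

lemma chi_comp_embedding (a : Fin n ↪ Fin N) (S : Finset (Fin n)) (x : Fin N → Bool) :
    chi S (x ∘ a) = chi (S.map a) x := by
  simp [chi]

lemma fourierCoef_comp_embedding (f : (Fin n → Bool) → ℝ) (a : Fin n ↪ Fin N)
    (U : Finset (Fin N)) :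
    fourierCoef N (fun x => f (x ∘ a)) U = ∑ S with S.map a = U, fourierCoef n f S := by
  calc fourierCoef N (fun x => f (x ∘ a)) U
      = bExp N fun x => ∑ S, fourierCoef n f S * (chi (S.map a) x * chi U x) := by
        simp only [← mul_assoc, ← Finset.sum_mul, ← chi_comp_embedding, sum_fourierCoef_mul_chi]
        rfl
    _ = ∑ S, fourierCoef n f S * if S.map a = U then 1 else 0 := by
        simp only [bExp_sum_const_mul _ _ fun (S : Finset (Fin n)) x => chi (S.map a) x * chi U x,
          bExp_chi_mul_chi]
    _ = ∑ S with S.map a = U, fourierCoef n f S := by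
        simp only [mul_ite, mul_one, mul_zero, Finset.sum_filter]

lemma fourierCoef_comp_embedding_sq (f : (Fin n → Bool) → ℝ) (a : Fin n ↪ Fin N)
    (U : Finset (Fin N)) :
    fourierCoef N (fun x => f (x ∘ a)) U ^ 2 = ∑ S with S.map a = U, fourierCoef n f S ^ 2 := by
  rw [fourierCoef_comp_embedding]
  by_cases hU : ∃ S : Finset (Fin n), S.map a = U
  · obtain ⟨S, rfl⟩ := hU
    simp [Finset.filter_eq']
  · push Not at hU
    simp [hU]

lemma sum_fourierCoef_comp_embedding_sq (f : (Fin n → Bool) → ℝ) (a : Fin n ↪ Fin N)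
    (𝒰 : Finset (Finset (Fin N))) :
    ∑ U ∈ 𝒰, fourierCoef N (fun x => f (x ∘ a)) U ^ 2 =
      ∑ S with S.map a ∈ 𝒰, fourierCoef n f S ^ 2 := by
  rw [← Finset.sum_fiberwise_of_maps_to (g := Finset.map a) (t := 𝒰) (by simp)]
  refine Finset.sum_congr rfl fun U hU => ?_
  rw [fourierCoef_comp_embedding_sq, Finset.filter_filter]
  congr 1 with S
  simpa using fun hS => hS ▸ hU

lemma fourierCoef_comp_embedding_eq_zero (f : (Fin n → Bool) → ℝ) (a : Fin n ↪ Fin N)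
    {U : Finset (Fin N)} (hU : ¬U ⊆ univ.map a) :
    fourierCoef N (fun x => f (x ∘ a)) U = 0 := by
  rw [fourierCoef_comp_embedding]
  refine Finset.sum_eq_zero fun S hS => absurd ?_ hU
  simp [← (Finset.mem_filter.1 hS).2]

lemma sq_bExp_comp_embedding_mul_le (f : (Fin n → Bool) → ℝ) (g : (Fin m → Bool) → ℝ)
    (a : Fin n ↪ Fin N) (b : Fin m ↪ Fin N) :
    (bExp N fun x => f (x ∘ a) * g (x ∘ b)) ^ 2 ≤
      (∑ S with S.map a ⊆ univ.map b, fourierCoef n f S ^ 2) * bExp m fun x => g x ^ 2 := by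
  set F := fourierCoef N fun x => f (x ∘ a)
  set G := fourierCoef N fun x => g (x ∘ b)
  calc (bExp N fun x => f (x ∘ a) * g (x ∘ b)) ^ 2
      = (∑ U ∈ (univ.map b).powerset, F U * G U) ^ 2 := by
        rw [← sum_fourierCoef_mul_fourierCoef, ← Finset.sum_subset (Finset.subset_univ _)]
        intro U _ hU
        rw [fourierCoef_comp_embedding_eq_zero g b (mt Finset.mem_powerset.2 hU), mul_zero]
    _ ≤ (∑ U ∈ (univ.map b).powerset, F U ^ 2) * ∑ U ∈ (univ.map b).powerset, G U ^ 2 :=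
        Finset.sum_mul_sq_le_sq_mul_sq _ _ _
    _ = (∑ S with S.map a ⊆ univ.map b, fourierCoef n f S ^ 2) * bExp m fun x => g x ^ 2 := by
        simp [F, G, sum_fourierCoef_comp_embedding_sq, ← sum_fourierCoef_sq]

end Fourier

section Counting

lemma card_smul_mem_mul_card {G X : Type*} [Group G] [Fintype G] [Fintype X] [DecidableEq X]
    [MulAction G X] [MulAction.IsPretransitive G X] (x : X) (B : Finset X) :
    #{g : G | g • x ∈ B} * Fintype.card X = Fintype.card G * #B := by
  have card_eq (y : X) : #{g : G | g • y ∈ B} = #{g : G | g • x ∈ B} := by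
    obtain ⟨h, rfl⟩ := MulAction.exists_smul_eq G x y
    exact Finset.card_equiv (Equiv.mulRight h) fun g => by simp [mul_smul]
  have card_preimage (g : G) : #{y : X | g • y ∈ B} = #B :=
    Finset.card_equiv (MulAction.toPerm g) fun y => by simp
  calc #{g : G | g • x ∈ B} * Fintype.card X = ∑ y : X, #{g : G | g • y ∈ B} := by
        simp [card_eq, mul_comm]
    _ = ∑ g : G, #{y : X | g • y ∈ B} := by
        simp only [Finset.card_filter]
        exact Finset.sum_comm
    _ = Fintype.card G * #B := by simp [card_preimage]

lemma card_perm_map_subset_mul_choose {α : Type*} [Fintype α] [DecidableEq α]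
    (U A : Finset α) :
    #{π : Equiv.Perm α | U.map π.toEmbedding ⊆ A} * (Fintype.card α).choose #U =
      Fintype.card (Equiv.Perm α) * (#A).choose #U := by
  classical
  have := Set.powersetCard.isPretransitive (α := α) (n := #U)
  have card_subsets : #{V : Set.powersetCard α #U | (V : Finset α) ⊆ A} = (#A).choose #U := by
    rw [← Finset.card_powersetCard, ← Finset.card_map (Function.Embedding.subtype _)]
    congr 1 with V
    simp [Finset.mem_powersetCard, and_comm]
  have card_all : Fintype.card (Set.powersetCard α #U) = (Fintype.card α).choose #U := by
    simpa only [Nat.card_eq_fintype_card] using Set.powersetCard.card (α := α) (n := #U)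
  have count := card_smul_mem_mul_card (G := Equiv.Perm α)
    (Set.powersetCard.ofCard (rfl : #U = #U)) {V | (V : Finset α) ⊆ A}
  rw [card_subsets, card_all] at count
  rw [← count]
  congr 3 with π
  simp [Finset.map_eq_image, Finset.smul_finset_def]

lemma descFactorial_mul_pow_le {n N : ℕ} (h : n ≤ N) (k : ℕ) :
    n.descFactorial k * N ^ k ≤ N.descFactorial k * n ^ k := by
  induction k with
  | zero => simp
  | succ k ih =>
    have factor_le : (n - k) * N ≤ (N - k) * n := by
      rw [Nat.sub_mul, Nat.sub_mul, Nat.mul_comm N n]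
      exact Nat.sub_le_sub_left (Nat.mul_le_mul_left k h) _
    calc n.descFactorial (k + 1) * N ^ (k + 1)
        = ((n - k) * N) * (n.descFactorial k * N ^ k) := by rw [Nat.descFactorial_succ]; ring
      _ ≤ ((N - k) * n) * (N.descFactorial k * n ^ k) := Nat.mul_le_mul factor_le ih
      _ = N.descFactorial (k + 1) * n ^ (k + 1) := by rw [Nat.descFactorial_succ]; ring

lemma choose_mul_pow_le {n N : ℕ} (h : n ≤ N) (k : ℕ) :
    n.choose k * N ^ k ≤ N.choose k * n ^ k := by
  refine Nat.le_of_mul_le_mul_left ?_ k.factorial_pos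
  simpa only [Nat.descFactorial_eq_factorial_mul_choose, mul_assoc]
    using descFactorial_mul_pow_le h k

lemma card_perm_map_subset_le {α : Type*} [Fintype α] [DecidableEq α] (U A : Finset α) :
    (#{π : Equiv.Perm α | U.map π.toEmbedding ⊆ A} : ℝ) ≤
      Fintype.card (Equiv.Perm α) * ((#A : ℝ) / Fintype.card α) ^ #U := by
  have choose_pos : (0 : ℝ) < (Fintype.card α).choose #U := by
    exact_mod_cast Nat.choose_pos (Finset.card_le_univ U)
  have choose_le : ((#A).choose #U : ℝ) ≤
      (Fintype.card α).choose #U * ((#A : ℝ) / Fintype.card α) ^ #U := by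
    rw [div_pow, ← mul_div_assoc]
    refine (le_div_iff₀ ?_).2 (mod_cast choose_mul_pow_le (Finset.card_le_univ A) #U)
    rcases U.eq_empty_or_nonempty with rfl | ⟨u, -⟩
    · simp
    · have : 0 < Fintype.card α := Fintype.card_pos_iff.2 ⟨u⟩
      positivity
  refine le_of_mul_le_mul_right ?_ choose_pos
  calc (#{π : Equiv.Perm α | U.map π.toEmbedding ⊆ A} : ℝ) * (Fintype.card α).choose #U
      = Fintype.card (Equiv.Perm α) * (#A).choose #U := by
        exact_mod_cast card_perm_map_subset_mul_choose U A
    _ ≤ Fintype.card (Equiv.Perm α) *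
          ((Fintype.card α).choose #U * ((#A : ℝ) / Fintype.card α) ^ #U) := by gcongr
    _ = Fintype.card (Equiv.Perm α) * ((#A : ℝ) / Fintype.card α) ^ #U *
          (Fintype.card α).choose #U := by ring

end Counting

/-- The noise stability `Stab_ρ(f) = ∑_S ρ^{|S|} f̂(S)²`, in its spectral form so that it makes
sense for every real `ρ`. -/
def noiseStability (n : ℕ) (ρ : ℝ) (f : (Fin n → Bool) → ℝ) : ℝ :=
  ∑ S, fourierCoef n f S ^ 2 * ρ ^ #S

section NoiseStability

variable {m n N : ℕ}

lemma noiseStability_nonneg {ρ : ℝ} (hρ : 0 ≤ ρ) (f : (Fin n → Bool) → ℝ) :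
    0 ≤ noiseStability n ρ f :=
  Finset.sum_nonneg fun S _ => by positivity

lemma noiseStability_mono {ρ ρ' : ℝ} (hρ : 0 ≤ ρ) (h : ρ ≤ ρ') (f : (Fin n → Bool) → ℝ) :
    noiseStability n ρ f ≤ noiseStability n ρ' f :=
  Finset.sum_le_sum fun S _ => by gcongr

lemma noiseStability_le_sum_weightLE {ρ : ℝ} (h0 : 0 ≤ ρ) (h1 : ρ ≤ 1) (K : ℕ)
    (f : (Fin n → Bool) → ℝ) :
    noiseStability n ρ f ≤
      ∑ k ∈ range K, weightLE n k f * ρ ^ k + (bExp n fun x => f x ^ 2) * ρ ^ K := by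
  have pow_card_le (S : Finset (Fin n)) :
      ρ ^ #S ≤ ∑ k ∈ range K, (if #S ≤ k then ρ ^ k else 0) + ρ ^ K := by
    have terms_nonneg : ∀ k ∈ range K, 0 ≤ if #S ≤ k then ρ ^ k else 0 := fun k _ => by positivity
    rcases lt_or_ge #S K with hS | hS
    · have := Finset.single_le_sum terms_nonneg (Finset.mem_range.2 hS)
      rw [if_pos le_rfl] at this
      exact this.trans (le_add_of_nonneg_right (pow_nonneg h0 K))
    · exact (pow_le_pow_of_le_one h0 h1 hS).trans
        (le_add_of_nonneg_left (Finset.sum_nonneg terms_nonneg))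
  calc noiseStability n ρ f
      ≤ ∑ S, fourierCoef n f S ^ 2 *
          (∑ k ∈ range K, (if #S ≤ k then ρ ^ k else 0) + ρ ^ K) :=
        Finset.sum_le_sum fun S _ => mul_le_mul_of_nonneg_left (pow_card_le S) (sq_nonneg _)
    _ = ∑ k ∈ range K, weightLE n k f * ρ ^ k + (bExp n fun x => f x ^ 2) * ρ ^ K := by
        simp only [mul_add, Finset.sum_add_distrib, Finset.mul_sum, ← sum_fourierCoef_sq,
          Finset.sum_mul, weightLE, Finset.sum_filter, ite_mul, zero_mul, mul_ite, mul_zero]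
        rw [Finset.sum_comm]

lemma orbitCP_nonneg (f : (Fin N → Bool) → ℝ) : 0 ≤ orbitCP N f := by
  unfold orbitCP
  positivity

lemma extendFn_comp_perm (hn : n ≤ N) (f : (Fin n → Bool) → ℝ) (π : Equiv.Perm (Fin N))
    (x : Fin N → Bool) :
    extendFn n N f (x ∘ π) = f (x ∘ (Fin.castLEEmb hn).trans π.toEmbedding) := by
  unfold extendFn
  congr 1 with i
  rw [dif_pos (i.2.trans_le hn)]
  rfl

lemma sum_perm_sq_bExp_le (f : (Fin n → Bool) → ℝ) (g : (Fin m → Bool) → ℝ)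
    (a : Fin n ↪ Fin N) (b : Fin m ↪ Fin N) :
    ∑ π : Equiv.Perm (Fin N), (bExp N fun x => f (x ∘ a.trans π.toEmbedding) * g (x ∘ b)) ^ 2 ≤
      Fintype.card (Equiv.Perm (Fin N)) *
        (noiseStability n (m / N) f * bExp m fun x => g x ^ 2) := by
  have bExp_sq_nonneg : 0 ≤ bExp m fun x => g x ^ 2 := bExp_nonneg fun x => sq_nonneg (g x)
  have card_le (S : Finset (Fin n)) :
      (#{π : Equiv.Perm (Fin N) | S.map (a.trans π.toEmbedding) ⊆ univ.map b} : ℝ) ≤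
        Fintype.card (Equiv.Perm (Fin N)) * ((m : ℝ) / N) ^ #S := by
    simpa only [Finset.map_map, Finset.card_map, Finset.card_univ, Fintype.card_fin]
      using card_perm_map_subset_le (S.map a) (univ.map b)
  calc ∑ π : Equiv.Perm (Fin N), (bExp N fun x => f (x ∘ a.trans π.toEmbedding) * g (x ∘ b)) ^ 2
      ≤ ∑ π : Equiv.Perm (Fin N),
          (∑ S with S.map (a.trans π.toEmbedding) ⊆ univ.map b, fourierCoef n f S ^ 2) *
            bExp m fun x => g x ^ 2 :=
        Finset.sum_le_sum fun π _ => sq_bExp_comp_embedding_mul_le f g _ b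
    _ = (∑ S, fourierCoef n f S ^ 2 *
          #{π : Equiv.Perm (Fin N) | S.map (a.trans π.toEmbedding) ⊆ univ.map b}) *
            bExp m fun x => g x ^ 2 := by
        simp only [← Finset.sum_mul, Finset.sum_filter]
        rw [Finset.sum_comm]
        simp only [← Finset.sum_filter, Finset.sum_const, nsmul_eq_mul, mul_comm]
    _ ≤ (∑ S, fourierCoef n f S ^ 2 *
          (Fintype.card (Equiv.Perm (Fin N)) * ((m : ℝ) / N) ^ #S)) *
            bExp m fun x => g x ^ 2 := by
        gcongr with S
        exact card_le S
    _ = Fintype.card (Equiv.Perm (Fin N)) *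
          (noiseStability n (m / N) f * bExp m fun x => g x ^ 2) := by
        simp only [noiseStability, mul_left_comm (_ ^ 2), ← Finset.mul_sum, mul_assoc]

lemma orbitCP_extendFn_le (hn : n ≤ N) (f : (Fin n → Bool) → ℝ) :
    orbitCP N (extendFn n N f) ≤ noiseStability n (n / N) f * bExp n fun x => f x ^ 2 := by
  set B := noiseStability n (n / N) f * bExp n fun x => f x ^ 2
  have sum_le : ∑ π' : Equiv.Perm (Fin N), ∑ π : Equiv.Perm (Fin N),
      (bExp N fun x => extendFn n N f (x ∘ π) * extendFn n N f (x ∘ π')) ^ 2 ≤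
      ∑ _π' : Equiv.Perm (Fin N), Fintype.card (Equiv.Perm (Fin N)) * B := by
    simp only [extendFn_comp_perm hn]
    exact Finset.sum_le_sum fun π' _ => sum_perm_sq_bExp_le f f _ _
  rw [orbitCP, div_le_iff₀ (by positivity), Finset.sum_comm]
  refine sum_le.trans_eq ?_
  rw [Finset.sum_const, Finset.card_univ, nsmul_eq_mul]
  ring

end NoiseStability

section Asymptotics

lemma natCast_rpow_isBigO_of_le {a b : ℝ} (h : a ≤ b) :
    (fun n : ℕ => (n : ℝ) ^ a) =O[atTop] fun n : ℕ => (n : ℝ) ^ b := by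
  refine .of_norm_eventuallyLE ?_
  filter_upwards [eventually_ge_atTop 1] with n hn
  rw [Real.norm_of_nonneg (by positivity)]
  exact Real.rpow_le_rpow_of_exponent_le (by exact_mod_cast hn) h

lemma div_le_rpow_neg {x y ε : ℝ} (hx : 0 < x) (h : x ^ (1 + ε) ≤ y) : x / y ≤ x ^ (-ε) := by
  calc x / y ≤ x / x ^ (1 + ε) := by gcongr
    _ = x ^ (-ε) := by
        rw [Real.rpow_add hx, Real.rpow_one, Real.rpow_neg hx.le]
        field_simp

lemma weightLE_mul_pow_isBigO {ε c : ℝ} {f : ∀ n : ℕ, (Fin n → Bool) → ℝ} {k : ℕ} (hk : k < c)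
    (hW : (fun n : ℕ => weightLE n k (f n)) =O[atTop] fun n : ℕ => (n : ℝ) ^ ((k : ℝ) - c)) :
    (fun n : ℕ => weightLE n k (f n) * ((n : ℝ) ^ (-ε)) ^ k) =O[atTop]
      fun n : ℕ => (n : ℝ) ^ (-(min ε 1 * max c 0)) := by
  have exponent_le : (k : ℝ) - c + -ε * k ≤ -(min ε 1 * max c 0) := by
    rw [max_eq_left (k.cast_nonneg.trans hk.le)]
    nlinarith [min_le_left ε 1, min_le_right ε 1, (Nat.cast_nonneg k : (0 : ℝ) ≤ k)]
  have product_eq : (fun n : ℕ => (n : ℝ) ^ ((k : ℝ) - c) * ((n : ℝ) ^ (-ε)) ^ k) =ᶠ[atTop]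
      fun n : ℕ => (n : ℝ) ^ ((k : ℝ) - c + -ε * k) := by
    filter_upwards [eventually_gt_atTop 0] with n hn
    rw [← Real.rpow_mul_natCast n.cast_nonneg, ← Real.rpow_add (by exact_mod_cast hn)]
  exact ((hW.mul (isBigO_refl _ _)).trans product_eq.isBigO).trans
    (natCast_rpow_isBigO_of_le exponent_le)

lemma noiseStability_rpow_neg_isBigO {ε c : ℝ} (hε : 0 ≤ ε) (f : ∀ n : ℕ, (Fin n → Bool) → ℝ)
    (hf : (fun n => bExp n fun x => f n x ^ 2) =O[atTop] fun _ => (1 : ℝ))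
    (hW : ∀ k : ℕ, k < c →
      (fun n : ℕ => weightLE n k (f n)) =O[atTop] fun n : ℕ => (n : ℝ) ^ ((k : ℝ) - c)) :
    (fun n : ℕ => noiseStability n ((n : ℝ) ^ (-ε)) (f n)) =O[atTop]
      fun n : ℕ => (n : ℝ) ^ (-(min ε 1 * max c 0)) := by
  set K := ⌈c⌉₊
  have low_degree (k : ℕ) (hk : k ∈ range K) :
      (fun n : ℕ => weightLE n k (f n) * ((n : ℝ) ^ (-ε)) ^ k) =O[atTop]
        fun n : ℕ => (n : ℝ) ^ (-(min ε 1 * max c 0)) :=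
    have lt_c : k < c := Nat.lt_ceil.1 (Finset.mem_range.1 hk)
    weightLE_mul_pow_isBigO lt_c (hW k lt_c)
  have tail : (fun n : ℕ => (bExp n fun x => f n x ^ 2) * ((n : ℝ) ^ (-ε)) ^ K) =O[atTop]
      fun n : ℕ => (n : ℝ) ^ (-(min ε 1 * max c 0)) := by
    have exponent_le : -ε * K ≤ -(min ε 1 * max c 0) := by
      rw [neg_mul, neg_le_neg_iff]
      gcongr
      · exact min_le_left ε 1
      · exact max_le (Nat.le_ceil c) K.cast_nonneg
    simpa only [Real.rpow_mul_natCast (Nat.cast_nonneg _), one_mul]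
      using hf.mul (natCast_rpow_isBigO_of_le exponent_le)
  refine IsBigO.trans (.of_norm_eventuallyLE ?_) ((IsBigO.fun_sum low_degree).add tail)
  filter_upwards [eventually_ge_atTop 1] with n hn
  rw [Real.norm_of_nonneg (noiseStability_nonneg (by positivity) _)]
  exact noiseStability_le_sum_weightLE (by positivity)
    (Real.rpow_le_one_of_one_le_of_nonpos (by exact_mod_cast hn) (neg_nonpos.2 hε)) K (f n)

lemma orbitCP_extendFn_isBigO {ε : ℝ} (hε : 0 ≤ ε) {N : ℕ → ℕ}
    (hN : ∀ᶠ n : ℕ in atTop, (n : ℝ) ^ (1 + ε) ≤ N n) (f : ∀ n : ℕ, (Fin n → Bool) → ℝ) :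
    (fun n : ℕ => orbitCP (N n) (extendFn n (N n) (f n))) =O[atTop]
      fun n : ℕ => noiseStability n ((n : ℝ) ^ (-ε)) (f n) * bExp n fun x => f n x ^ 2 := by
  refine .of_norm_eventuallyLE ?_
  filter_upwards [hN, eventually_ge_atTop 1] with n hnN hn
  have one_le : (1 : ℝ) ≤ n := by exact_mod_cast hn
  have le_N : n ≤ N n := by
    exact_mod_cast (Real.self_le_rpow_of_one_le one_le (le_add_of_nonneg_right hε)).trans hnN
  rw [Real.norm_of_nonneg (orbitCP_nonneg _)]
  refine (orbitCP_extendFn_le le_N (f n)).trans ?_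
  gcongr
  · exact bExp_nonneg fun x => sq_nonneg (f n x)
  · exact noiseStability_mono (by positivity) (div_le_rpow_neg (by positivity) hnN) (f n)

end Asymptotics

lemma bExp_sq_eq_one {n : ℕ} {f : (Fin n → Bool) → ℝ} (hf : IsBooleanFn f) :
    (bExp n fun x => f x ^ 2) = 1 := by
  simp [bExp, fun x => sq_eq_one_iff.2 (hf x)]

theorem weight_bigO_implies_orbitCP_bigO_general {ε c : ℝ} (hε : 0 ≤ ε) {N : ℕ → ℕ}
    (hN : ∀ᶠ n : ℕ in atTop, (n : ℝ) ^ (1 + ε) ≤ N n) (f : ∀ n : ℕ, (Fin n → Bool) → ℝ)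
    (hf : (fun n => bExp n fun x => f n x ^ 2) =O[atTop] fun _ => (1 : ℝ))
    (hW : ∀ k : ℕ, k < c →
      (fun n : ℕ => weightLE n k (f n)) =O[atTop] fun n : ℕ => (n : ℝ) ^ ((k : ℝ) - c)) :
    (fun n : ℕ => orbitCP (N n) (extendFn n (N n) (f n))) =O[atTop]
      fun n : ℕ => (n : ℝ) ^ (-(min ε 1 * max c 0)) := by
  simpa only [mul_one] using
    (orbitCP_extendFn_isBigO hε hN f).trans ((noiseStability_rpow_neg_isBigO hε f hf hW).mul hf)

lemma neg_min_one_mul_max_zero_le {ε : ℝ} (hε : 0 ≤ ε) (c : ℝ) :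
    -(min ε 1 * max c 0) ≤ -(ε / (1 + ε)) * c := by
  have ratio_le : ε / (1 + ε) ≤ min ε 1 :=
    le_min (div_le_self hε (by linarith)) (div_le_one_of_le₀ (by linarith) (by linarith))
  rw [neg_mul, neg_le_neg_iff]
  calc ε / (1 + ε) * c ≤ ε / (1 + ε) * max c 0 := by gcongr; exact le_max_left c 0
    _ ≤ min ε 1 * max c 0 := by gcongr

/-- If for some universal `c` and every fixed `k`, `W^{≤k}(f_n) = O(n^{k-c})`,
then with `N = n^{1+ε}`, `CP(orb(f̄_n), U^N) = O(n^{-(ε/(1+ε))c})`. -/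
theorem weight_bigO_implies_orbitCP_bigO
    (ε : ℝ) (hε : 0 < ε)
    (f : ∀ n : ℕ, (Fin n → Bool) → ℝ) (hf : ∀ n, IsBooleanFn (f n))
    (c : ℝ)
    (hW : ∀ k : ℕ,
      (fun n : ℕ => weightLE n k (f n)) =O[atTop] fun n : ℕ => (n : ℝ) ^ ((k : ℝ) - c)) :
    (fun n : ℕ => orbitCP (Ndim ε n) (extendFn n (Ndim ε n) (f n))) =O[atTop]
      fun n : ℕ => (n : ℝ) ^ (-(ε / (1 + ε)) * c) := by
  exact (weight_bigO_implies_orbitCP_bigO_general hε.le (.of_forall fun n => Nat.le_ceil _) f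
    (by simp only [bExp_sq_eq_one (hf _), isBigO_refl]) fun k _ => hW k).trans
      (natCast_rpow_isBigO_of_le (neg_min_one_mul_max_zero_le hε.le c))
end
end
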